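/- Let δ>0 and s ∈ (0,1). The derivative d/dr G_δ(s,r), defined for r ∈ (0,s), has a limit as r increases to s, and lim_{r↑s} d/dr G_δ(s,r) = δ·(1−s) − (δ−1)/2. -/

import Mathlib

/-!
For `r < s` the kernel evaluates `₂F₁` at the cross-ratio `z` of `r, s, 0, 1`, which increases to
`1` as `r ↑ s`. There `₂F₁((δ+1)/2, (δ+1)/2; δ/2; z)` blows up like `(1 - z)^(-δ/2-1)`, and Euler's
transformation absorbs the blow-up into the prefactor `(s - r)^(δ/2+1)`:
`G_δ(s,r) = K(δ) √(s(1-s)) √(r(1-r)) ₂F₁(-1/2, -1/2; δ/2; z)`. The new hypergeometric function and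
its derivative, a multiple of `₂F₁(1/2, 1/2; δ/2+1; z)`, extend continuously to `z = 1` by Abel's
theorem, and by Gauss's summation theorem both functions take the value `δ / K(δ)` there.

Euler's transformation is an identity of formal power series: multiplication by `(1 - X)^(a+b-c)`
intertwines the hypergeometric operators of `(a, b; c)` and `(c-a, c-b; c)`, and a power series with
constant term `1` annihilated by such an operator is the hypergeometric series. Gauss's theorem
follows from the contiguous relation `c(c-a-b) F(c) = (c-a)(c-b) F(c+1)`, whose difference
telescopes, on iterating it `n` times: `F(c+n) → 1`, while the rising factorials are asymptotic to
reciprocal Gamma values, `(x)_n ~ n! n^(x-1) / Γ(x)`.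
-/

open MeasureTheory Real Filter

/-- Ascending Pochhammer symbol `(a)_k = a(a+1)⋯(a+k-1)`. -/
noncomputable def poch (a : ℝ) (k : ℕ) : ℝ := ∏ i ∈ Finset.range k, (a + i)

/-- Gauss hypergeometric function `₂F₁(a,b,c,z) = ∑ (a)_k (b)_k / (k! (c)_k) z^k`. -/
noncomputable def hyp2F1 (a b c z : ℝ) : ℝ :=
  ∑' k : ℕ, (poch a k * poch b k) / ((Nat.factorial k : ℝ) * poch c k) * z ^ k

/-- `K(δ) = 2 Γ((δ+1)/2)² / Γ(δ/2)²`. -/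
noncomputable def Kcoef (δ : ℝ) : ℝ :=
  2 * Real.Gamma ((δ + 1) / 2) ^ 2 / Real.Gamma (δ / 2) ^ 2

/-- Two-point kernel `G_δ(s,r)`, equal to the second moment `E^δ[X_s X_r]` of a
δ-dimensional Bessel bridge from 0 to 0 over [0,1]. -/
noncomputable def twoPt (δ s r : ℝ) : ℝ :=
  if s < r then
    Kcoef δ * (r - s) ^ (δ / 2 + 1) * (s * (1 - r)) ^ ((1 : ℝ) / 2) *
      (r * (1 - s)) ^ (-((δ + 1) / 2)) *
      hyp2F1 ((δ + 1) / 2) ((δ + 1) / 2) (δ / 2) (s * (1 - r) / (r * (1 - s)))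
  else
    Kcoef δ * (s - r) ^ (δ / 2 + 1) * (r * (1 - s)) ^ ((1 : ℝ) / 2) *
      (s * (1 - r)) ^ (-((δ + 1) / 2)) *
      hyp2F1 ((δ + 1) / 2) ((δ + 1) / 2) (δ / 2) (r * (1 - s) / (s * (1 - r)))

/-- Coefficient `D(s,r)`. -/
noncomputable def Dcoef (s r : ℝ) : ℝ :=
  if s < r then (1 - s) / ((r - s) * (1 - r)) else s / (r * (s - r))

/-- Coefficient `C_k = Γ(k+(δ+1)/2)/(Γ(δ/2) Γ(k+δ/2) k!)`. -/
noncomputable def Ccoef (δ : ℝ) (k : ℕ) : ℝ :=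
  Real.Gamma ((k : ℝ) + (δ + 1) / 2) /
    (Real.Gamma (δ / 2) * Real.Gamma ((k : ℝ) + δ / 2) * (Nat.factorial k : ℝ))

/-- Coefficient `f_k(s,r)`. -/
noncomputable def fcoef (s r : ℝ) (k : ℕ) : ℝ :=
  if s < r then (2 * (r - s)) ^ ((1 : ℝ) / 2 - (k : ℝ)) * (s / r) ^ ((k : ℝ) + 1 / 2)
  else (2 * (s - r)) ^ ((1 : ℝ) / 2 - (k : ℝ)) * ((1 - s) / (1 - r)) ^ ((k : ℝ) + 1 / 2)

/-- `Σ^δ_{r,s}(b) = Σ^δ_r(X_s | b)`, the density-weighted conditional expectation of a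
δ-dimensional Bessel bridge. -/
noncomputable def SigmaRS (δ r s b : ℝ) : ℝ :=
  ((2 : ℝ) ^ (δ / 2 - 1) * (r * (1 - r)) ^ (δ / 2))⁻¹ *
    Real.exp (-(Dcoef s r) * b ^ 2 / 2) *
    ∑' k : ℕ, Ccoef δ k * fcoef s r k * b ^ (2 * k)

open scoped Nat Topology

section Coefficients

lemma ne_neg_natCast_of_pos {R : Type*} [Ring R] [PartialOrder R] [IsOrderedRing R] {c : R}
    (hc : 0 < c) (k : ℕ) : c ≠ -k :=
  ((neg_nonpos.2 k.cast_nonneg).trans_lt hc).ne'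

lemma add_natCast_ne_neg_natCast {R : Type*} [CommRing R] {c : R} (hc : ∀ k : ℕ, c ≠ -k)
    (n k : ℕ) : c + n ≠ -k :=
  fun h => hc (n + k) (by push_cast; linear_combination h)

lemma ascPochhammer_eval_succ_left {S : Type*} [CommSemiring S] (a : S) (n : ℕ) :
    (ascPochhammer S (n + 1)).eval a = a * (ascPochhammer S n).eval (a + 1) := by
  simp [ascPochhammer_succ_left]

lemma ascPochhammer_eval_eq_prod_range {S : Type*} [CommSemiring S] (n : ℕ) (a : S) :
    (ascPochhammer S n).eval a = ∏ i ∈ Finset.range n, (a + i) := by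
  induction n with
  | zero => simp
  | succ n ih => rw [ascPochhammer_succ_eval, ih, Finset.prod_range_succ]

lemma ascPochhammer_eval_le_eval {S : Type*} [CommSemiring S] [PartialOrder S] [IsOrderedRing S]
    (n : ℕ) {x y : S} (hx : 0 ≤ x) (hxy : x ≤ y) :
    (ascPochhammer S n).eval x ≤ (ascPochhammer S n).eval y := by
  simp only [ascPochhammer_eval_eq_prod_range]
  exact Finset.prod_le_prod (fun i _ => add_nonneg hx i.cast_nonneg) fun i _ => by gcongr

variable {K : Type*} [Field K]

@[simp]
lemma ordinaryHypergeometricCoefficient_zero (a b c : K) :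
    ordinaryHypergeometricCoefficient a b c 0 = 1 := by
  simp [ordinaryHypergeometricCoefficient]

lemma ascPochhammer_eval_ne_zero {c : K} (hc : ∀ k : ℕ, c ≠ -k) (n : ℕ) :
    (ascPochhammer K n).eval c ≠ 0 := by
  rw [Ne, ascPochhammer_eval_eq_zero_iff]
  rintro ⟨k, -, hk⟩
  exact hc k (by rw [hk, neg_neg])

variable [CharZero K]

lemma ordinaryHypergeometricCoefficient_add_one (a b : K) {c : K} {n : ℕ} (hc : c ≠ -n) :
    (n + 1) * (n + c) * ordinaryHypergeometricCoefficient a b c (n + 1) =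
      (n + a) * (n + b) * ordinaryHypergeometricCoefficient a b c n := by
  have hn : (n + 1 : K) ≠ 0 := n.cast_add_one_ne_zero
  have hcn : c + n ≠ 0 := fun h => hc (eq_neg_of_add_eq_zero_left h)
  simp only [ordinaryHypergeometricCoefficient, ascPochhammer_succ_eval, Nat.factorial_succ,
    Nat.cast_mul, Nat.cast_succ, mul_inv]
  field_simp
  ring

lemma add_one_mul_ordinaryHypergeometricCoefficient (a b c : K) (n : ℕ) :
    (n + 1) * ordinaryHypergeometricCoefficient a b c (n + 1) =
      a * b / c * ordinaryHypergeometricCoefficient (a + 1) (b + 1) (c + 1) n := by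
  have hn : (n + 1 : K) ≠ 0 := n.cast_add_one_ne_zero
  simp only [ordinaryHypergeometricCoefficient, ascPochhammer_eval_succ_left, Nat.factorial_succ,
    Nat.cast_mul, Nat.cast_succ, mul_inv]
  field_simp

lemma mul_ordinaryHypergeometricCoefficient_add_one_right (a b : K) {c : K}
    (hc : ∀ k : ℕ, c ≠ -k) (n : ℕ) :
    (c + n) * ordinaryHypergeometricCoefficient a b (c + 1) n =
      c * ordinaryHypergeometricCoefficient a b c n := by
  have hcn : c + n ≠ 0 := fun h => hc n (eq_neg_of_add_eq_zero_left h)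
  have h := (ascPochhammer_eval_succ_left c n).symm.trans (ascPochhammer_succ_eval n c)
  have hp := ascPochhammer_eval_ne_zero hc n
  have hp' : (ascPochhammer K n).eval (c + 1) ≠ 0 :=
    right_ne_zero_of_mul (h ▸ mul_ne_zero hp hcn)
  have hn : (n ! : K) ≠ 0 := Nat.cast_ne_zero.2 n.factorial_ne_zero
  simp only [ordinaryHypergeometricCoefficient]
  field_simp
  linear_combination -(ascPochhammer K n).eval a * (ascPochhammer K n).eval b * h

end Coefficients

section FormalEuler

open PowerSeries

variable {K : Type*} [Field K]

/-- The hypergeometric series `₂F₁(a, b; c; X)` as a formal power series. -/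
noncomputable def hypergeometricPowerSeries (a b c : K) : K⟦X⟧ :=
  .mk (ordinaryHypergeometricCoefficient a b c)

/-- The operator `X(1 - X) f'' + (c - (a + b + 1)X) f' - ab f` of the Gauss hypergeometric
equation, acting on formal power series. -/
noncomputable def hypergeometricOperator (a b c : K) (f : K⟦X⟧) : K⟦X⟧ :=
  X * (1 - X) * d⁄dX K (d⁄dX K f) + (C c - C (a + b + 1) * X) * d⁄dX K f - C (a * b) * f

lemma coeff_hypergeometricOperator (a b c : K) (f : K⟦X⟧) (n : ℕ) :
    coeff n (hypergeometricOperator a b c f) =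
      (n + 1) * (n + c) * coeff (n + 1) f - (n + a) * (n + b) * coeff n f := by
  have expand : hypergeometricOperator a b c f =
      X * d⁄dX K (d⁄dX K f) - X * (X * d⁄dX K (d⁄dX K f)) +
        C c * d⁄dX K f - C (a + b + 1) * (X * d⁄dX K f) - C (a * b) * f := by
    rw [hypergeometricOperator]
    ring
  rw [expand]
  simp only [map_add (coeff n), map_sub (coeff n), coeff_C_mul]
  rcases n with _ | _ | n <;>
    simp only [coeff_zero_X_mul, coeff_succ_X_mul, coeff_derivative] <;> push_cast <;> ring

lemma hypergeometricOperator_hypergeometricPowerSeries [CharZero K] (a b : K) {c : K}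
    (hc : ∀ k : ℕ, c ≠ -k) :
    hypergeometricOperator a b c (hypergeometricPowerSeries a b c) = 0 := by
  ext n
  simp [coeff_hypergeometricOperator, hypergeometricPowerSeries, coeff_mk,
    ordinaryHypergeometricCoefficient_add_one a b (hc n)]

lemma eq_hypergeometricPowerSeries [CharZero K] {a b c : K} (hc : ∀ k : ℕ, c ≠ -k) {f : K⟦X⟧}
    (hf : hypergeometricOperator a b c f = 0) (hf0 : constantCoeff f = 1) :
    f = hypergeometricPowerSeries a b c := by
  ext n
  induction n with
  | zero => simp [hf0, hypergeometricPowerSeries]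
  | succ n ih =>
    have hn : (n + 1 : K) * (n + c) ≠ 0 :=
      mul_ne_zero n.cast_add_one_ne_zero fun h => hc n (eq_neg_of_add_eq_zero_right h)
    have hfn := coeff_hypergeometricOperator a b c f n
    rw [hf, map_zero, ih, hypergeometricPowerSeries, coeff_mk] at hfn
    rw [hypergeometricPowerSeries, coeff_mk]
    apply mul_left_cancel₀ hn
    rw [ordinaryHypergeometricCoefficient_add_one a b (hc n)]
    linear_combination -hfn

lemma one_sub_X_mul_derivative_hypergeometricPowerSeries [CharZero K] (p : K) :
    (1 - X) * d⁄dX K (hypergeometricPowerSeries (-p) 1 1) =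
      -C p * hypergeometricPowerSeries (-p) 1 1 := by
  have hcoeff (n : ℕ) : coeff (n + 1) (hypergeometricPowerSeries (-p) 1 1) * (n + 1 : K) =
      (n - p) * coeff n (hypergeometricPowerSeries (-p) 1 1) := by
    have hn : (n + 1 : K) ≠ 0 := n.cast_add_one_ne_zero
    have h1 : (1 : K) ≠ -n := fun h => hn (by linear_combination h)
    apply mul_left_cancel₀ hn
    simp only [hypergeometricPowerSeries, coeff_mk]
    linear_combination ordinaryHypergeometricCoefficient_add_one (-p) 1 h1
  ext n
  rw [sub_mul, one_mul, map_sub, neg_mul, map_neg, coeff_C_mul, coeff_derivative, hcoeff]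
  rcases n with _ | n
  · simp
  · rw [coeff_succ_X_mul, coeff_derivative]
    push_cast
    ring

lemma hypergeometricOperator_mul {a b c p : K} (hp : p = a + b - c) {f g : K⟦X⟧}
    (hg : (1 - X) * d⁄dX K g = -C p * g) :
    hypergeometricOperator (c - a) (c - b) c (g * f) = g * hypergeometricOperator a b c f := by
  have hg' : (1 - X) * d⁄dX K (d⁄dX K g) = (1 - C p) * d⁄dX K g := by
    have h := congrArg (d⁄dX K) hg
    simp only [Derivation.leibniz, smul_eq_mul, map_sub, map_neg, Derivation.map_one_eq_zero,
      derivative_X, derivative_C] at h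
    linear_combination h
  subst hp
  simp only [hypergeometricOperator, Derivation.leibniz, smul_eq_mul, map_add, map_sub, map_mul,
    map_one] at *
  linear_combination X * f * hg' + (2 * X * d⁄dX K f + C c * f) * hg

theorem hypergeometricPowerSeries_euler_transformation [CharZero K] (a b : K) {c : K}
    (hc : ∀ k : ℕ, c ≠ -k) :
    hypergeometricPowerSeries (-(a + b - c)) 1 1 * hypergeometricPowerSeries a b c =
      hypergeometricPowerSeries (c - a) (c - b) c := by
  refine eq_hypergeometricPowerSeries hc ?_ ?_
  · rw [hypergeometricOperator_mul rfl (one_sub_X_mul_derivative_hypergeometricPowerSeries _),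
      hypergeometricOperator_hypergeometricPowerSeries a b hc, mul_zero]
  · simp [hypergeometricPowerSeries]

end FormalEuler

section Convergence

variable {𝕂 : Type*} [RCLike 𝕂]

lemma one_le_radius_ordinaryHypergeometricSeries (𝔸 : Type*) [NormedDivisionRing 𝔸]
    [NormedAlgebra 𝕂 𝔸] (a b c : 𝕂) : 1 ≤ (ordinaryHypergeometricSeries 𝔸 a b c).radius := by
  by_cases habc : ∀ k : ℕ, (k : 𝕂) ≠ -a ∧ (k : 𝕂) ≠ -b ∧ (k : 𝕂) ≠ -c
  · exact (ordinaryHypergeometricSeries_radius_eq_one 𝔸 a b c habc).ge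
  · obtain ⟨k, hk⟩ := not_forall.1 habc
    obtain h | h | h : a = -k ∨ b = -k ∨ c = -k := by grind
    · simp [h, ordinaryHypergeometric_radius_top_of_neg_nat₁]
    · simp [h, ordinaryHypergeometric_radius_top_of_neg_nat₂]
    · simp [h, ordinaryHypergeometric_radius_top_of_neg_nat₃]

lemma hasFPowerSeriesOnBall_ordinaryHypergeometric (𝔸 : Type*) [NormedDivisionRing 𝔸]
    [NormedAlgebra 𝕂 𝔸] [CompleteSpace 𝔸] (a b c : 𝕂) :
    HasFPowerSeriesOnBall (₂F₁ a b c : 𝔸 → 𝔸) (ordinaryHypergeometricSeries 𝔸 a b c) 0 1 :=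
  have h := one_le_radius_ordinaryHypergeometricSeries 𝔸 a b c
  ((ordinaryHypergeometricSeries 𝔸 a b c).hasFPowerSeriesOnBall (zero_lt_one.trans_le h)).mono
    zero_lt_one h

lemma ordinaryHypergeometric_eq_tsum_coefficient (a b c z : 𝕂) :
    ₂F₁ a b c z = ∑' n, ordinaryHypergeometricCoefficient a b c n * z ^ n :=
  ordinaryHypergeometric_sum_eq a b c z

lemma summable_norm_ordinaryHypergeometricCoefficient_mul_pow (a b c : 𝕂) {z : 𝕂}
    (hz : ‖z‖ < 1) : Summable fun n => ‖ordinaryHypergeometricCoefficient a b c n * z ^ n‖ := by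
  have hz' : z ∈ Metric.eball 0 (ordinaryHypergeometricSeries 𝕂 a b c).radius :=
    Metric.eball_subset_eball (one_le_radius_ordinaryHypergeometricSeries 𝕂 a b c)
      (by simpa [← ofReal_norm] using hz)
  refine ((ordinaryHypergeometricSeries 𝕂 a b c).summable_norm_apply hz').congr fun n => ?_
  rw [ordinaryHypergeometricSeries_apply_eq, smul_eq_mul, ordinaryHypergeometricCoefficient]

lemma hasSum_deriv_of_hasFPowerSeriesOnBall {𝕜 F : Type*} [NontriviallyNormedField 𝕜]
    [NormedAddCommGroup F] [NormedSpace 𝕜 F] [CompleteSpace F] {f : 𝕜 → F}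
    {p : FormalMultilinearSeries 𝕜 𝕜 F} {x y : 𝕜} {r : ENNReal}
    (hf : HasFPowerSeriesOnBall f p x r) (hy : y ∈ Metric.eball 0 r) :
    HasSum (fun n => y ^ n • (n + 1) • p.coeff (n + 1)) (deriv f (x + y)) := by
  have h := (hf.fderiv.hasSum hy).mapL (ContinuousLinearMap.apply 𝕜 F 1)
  simpa only [FormalMultilinearSeries.apply_eq_pow_smul_coeff, map_smul,
    ContinuousLinearMap.apply_apply, FormalMultilinearSeries.derivSeries_coeff_one,
    fderiv_apply_one_eq_deriv] using h

theorem hasDerivAt_ordinaryHypergeometric (a b c : 𝕂) {z : 𝕂} (hz : ‖z‖ < 1) :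
    HasDerivAt (₂F₁ a b c) (a * b / c * ₂F₁ (a + 1) (b + 1) (c + 1) z) z := by
  have hball := hasFPowerSeriesOnBall_ordinaryHypergeometric 𝕂 a b c
  have hmem : z ∈ Metric.eball (0 : 𝕂) 1 := by simpa [← ofReal_norm] using hz
  have hderiv : deriv (₂F₁ a b c) z = a * b / c * ₂F₁ (a + 1) (b + 1) (c + 1) z := by
    rw [← zero_add z, ← (hasSum_deriv_of_hasFPowerSeriesOnBall hball hmem).tsum_eq, zero_add,
      ordinaryHypergeometric_eq_tsum_coefficient, ← tsum_mul_left]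
    refine tsum_congr fun n => ?_
    rw [ordinaryHypergeometricSeries, FormalMultilinearSeries.coeff_ofScalars, nsmul_eq_mul,
      smul_eq_mul, Nat.cast_succ, add_one_mul_ordinaryHypergeometricCoefficient]
    ring
  rw [← hderiv]
  exact (hball.differentiableOn.differentiableAt (Metric.isOpen_eball.mem_nhds hmem)).hasDerivAt

lemma one_sub_rpow_eq_ordinaryHypergeometric (p : ℝ) {z : ℝ} (hz : |z| < 1) :
    (1 - z) ^ p = ₂F₁ (-p) 1 1 z := by
  have hmem : -z ∈ Metric.eball (0 : ℝ) 1 := by simpa [← ofReal_norm] using hz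
  have h := (Real.one_add_rpow_hasFPowerSeriesOnBall_zero (a := p)).sum hmem
  rw [binomialSeries_eq_ordinaryHypergeometricSeries (b := 1) (by norm_cast; simp)] at h
  simp only [FormalMultilinearSeries.sum,
    FormalMultilinearSeries.compContinuousLinearMap_apply] at h
  simpa [FormalMultilinearSeries.sum, ordinaryHypergeometric, ← sub_eq_add_neg,
    Function.comp_def] using h

theorem ordinaryHypergeometric_euler_transformation (a b : ℝ) {c z : ℝ} (hc : ∀ k : ℕ, c ≠ -k)
    (hz : |z| < 1) : (1 - z) ^ (a + b - c) * ₂F₁ a b c z = ₂F₁ (c - a) (c - b) c z := by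
  rw [one_sub_rpow_eq_ordinaryHypergeometric _ hz]
  simp only [ordinaryHypergeometric_eq_tsum_coefficient]
  rw [tsum_mul_tsum_eq_tsum_sum_antidiagonal_of_summable_norm
    (summable_norm_ordinaryHypergeometricCoefficient_mul_pow (-(a + b - c)) 1 1 hz)
    (summable_norm_ordinaryHypergeometricCoefficient_mul_pow a b c hz)]
  refine tsum_congr fun n => ?_
  have h := congrArg (PowerSeries.coeff n) (hypergeometricPowerSeries_euler_transformation a b hc)
  simp only [hypergeometricPowerSeries, PowerSeries.coeff_mul, PowerSeries.coeff_mk] at h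
  rw [← h, Finset.sum_mul]
  refine Finset.sum_congr rfl fun kl hkl => ?_
  rw [← Finset.HasAntidiagonal.mem_antidiagonal.1 hkl, pow_add]
  ring

end Convergence

section GaussSummation

lemma tendsto_ascPochhammer_eval_div (s : ℝ) :
    Tendsto (fun n : ℕ => (ascPochhammer ℝ n).eval s / (n ! * (n : ℝ) ^ (s - 1))) atTop
      (𝓝 (Gamma s)⁻¹) := by
  -- At the poles `Gamma s` has the junk value `0`, which is the correct value of `1 / Γ`.
  by_cases hs : ∃ m : ℕ, s = -m
  · obtain ⟨m, rfl⟩ := hs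
    rw [Gamma_neg_nat_eq_zero, inv_zero]
    refine tendsto_const_nhds.congr' ?_
    filter_upwards [eventually_gt_atTop m] with n hn
    rw [(ascPochhammer_eval_eq_zero_iff n _).2 ⟨m, hn, (neg_neg _).symm⟩, zero_div]
  · push Not at hs
    have hinv := (GammaSeq_tendsto_Gamma s).inv₀ (Gamma_ne_zero hs)
    have hratio : Tendsto (fun n : ℕ => (n : ℝ) / (n + s)) atTop (𝓝 1) :=
      tendsto_natCast_div_add_atTop s
    rw [← mul_one (Gamma s)⁻¹]
    refine (hinv.mul hratio).congr' ?_
    filter_upwards [eventually_gt_atTop 0] with n hn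
    have hn' : (0 : ℝ) < n := Nat.cast_pos.2 hn
    have hsn : n + s ≠ 0 := fun h => hs n (eq_neg_of_add_eq_zero_right h)
    have hprod : ∏ j ∈ Finset.range (n + 1), (s + j) = (ascPochhammer ℝ n).eval s * (n + s) := by
      rw [← ascPochhammer_eval_eq_prod_range, ascPochhammer_succ_eval, add_comm s]
    rw [GammaSeq, hprod, rpow_sub_one hn'.ne']
    field_simp

lemma isBigO_ordinaryHypergeometricCoefficient (a b : ℝ) {c : ℝ} (hc : ∀ k : ℕ, c ≠ -k) :
    ordinaryHypergeometricCoefficient a b c =O[atTop] fun n : ℕ => (n : ℝ) ^ (a + b - c - 1) := by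
  have hlim := ((tendsto_ascPochhammer_eval_div a).mul (tendsto_ascPochhammer_eval_div b)).div
    (tendsto_ascPochhammer_eval_div c) (inv_ne_zero (Gamma_ne_zero hc))
  have hne : ∀ᶠ n : ℕ in atTop, (n : ℝ) ^ (a + b - c - 1) ≠ 0 := by
    filter_upwards [eventually_gt_atTop 0] with n hn
    positivity
  refine Asymptotics.isBigO_of_div_tendsto_nhds (hne.mono fun n hn h => (hn h).elim) _
    (hlim.congr' ?_)
  filter_upwards [eventually_gt_atTop 0] with n hn
  have hn' : (0 : ℝ) < n := Nat.cast_pos.2 hn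
  have hpow : (n : ℝ) ^ (a + b - c - 1) =
      (n : ℝ) ^ (a - 1) * (n : ℝ) ^ (b - 1) / (n : ℝ) ^ (c - 1) := by
    rw [← rpow_add hn', ← rpow_sub hn']
    ring_nf
  have hcn := ascPochhammer_eval_ne_zero hc n
  simp only [Pi.div_apply, hpow, ordinaryHypergeometricCoefficient]
  field_simp

lemma summable_ordinaryHypergeometricCoefficient {a b c : ℝ} (hc : ∀ k : ℕ, c ≠ -k)
    (habc : a + b < c) : Summable (ordinaryHypergeometricCoefficient a b c) :=
  summable_of_isBigO_nat (Real.summable_nat_rpow.2 (by linarith))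
    (isBigO_ordinaryHypergeometricCoefficient a b hc)

lemma tendsto_natCast_mul_ordinaryHypergeometricCoefficient {a b c : ℝ} (hc : ∀ k : ℕ, c ≠ -k)
    (habc : a + b < c) :
    Tendsto (fun n : ℕ => n * ordinaryHypergeometricCoefficient a b c n) atTop (𝓝 0) := by
  have hpow : Tendsto (fun n : ℕ => (n : ℝ) ^ (-(c - a - b))) atTop (𝓝 0) :=
    (tendsto_rpow_neg_atTop (by linarith)).comp tendsto_natCast_atTop_atTop
  refine Asymptotics.IsBigO.trans_tendsto ?_ hpow
  refine ((Asymptotics.isBigO_refl (fun n : ℕ => (n : ℝ)) atTop).mul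
    (isBigO_ordinaryHypergeometricCoefficient a b hc)).congr' .rfl ?_
  filter_upwards [eventually_gt_atTop 0] with n hn
  rw [show a + b - c - 1 = -(c - a - b) - 1 by ring, rpow_sub_one (by positivity)]
  field_simp

lemma ordinaryHypergeometric_one_eq_tsum (a b c : ℝ) :
    ₂F₁ a b c (1 : ℝ) = ∑' n, ordinaryHypergeometricCoefficient a b c n := by
  simp [ordinaryHypergeometric_eq_tsum_coefficient]

lemma ordinaryHypergeometric_one_contiguous {a b c : ℝ} (hc : ∀ k : ℕ, c ≠ -k)
    (habc : a + b < c) :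
    c * (c - a - b) * ₂F₁ a b c (1 : ℝ) = (c - a) * (c - b) * ₂F₁ a b (c + 1) (1 : ℝ) := by
  have hc' (k : ℕ) : c + 1 ≠ -k := mod_cast add_natCast_ne_neg_natCast hc 1 k
  set u := ordinaryHypergeometricCoefficient a b c
  set v := ordinaryHypergeometricCoefficient a b (c + 1)
  have telescope (n : ℕ) :
      c * (c - a - b) * u n - (c - a) * (c - b) * v n =
        c * (n * u n) - c * (↑(n + 1) * u (n + 1)) := by
    have hcn : c + n ≠ 0 := fun h => hc n (eq_neg_of_add_eq_zero_left h)
    apply mul_left_cancel₀ hcn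
    push_cast
    linear_combination
      c * ordinaryHypergeometricCoefficient_add_one a b (hc n) -
      (c - a) * (c - b) * mul_ordinaryHypergeometricCoefficient_add_one_right a b hc n
  have hu : Summable u := summable_ordinaryHypergeometricCoefficient hc habc
  have hv : Summable v :=
    summable_ordinaryHypergeometricCoefficient hc' (habc.trans (lt_add_one c))
  have hsum := ((hu.hasSum.mul_left (c * (c - a - b))).sub
    (hv.hasSum.mul_left ((c - a) * (c - b)))).tendsto_sum_nat
  have hlim : Tendsto (fun n : ℕ => c * (n * u n)) atTop (𝓝 0) := by
    simpa using (tendsto_natCast_mul_ordinaryHypergeometricCoefficient hc habc).const_mul c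
  simp only [telescope, Finset.sum_range_sub' (fun n : ℕ => c * (n * u n))] at hsum
  have hzero := tendsto_nhds_unique hsum (hlim.const_sub _)
  rw [ordinaryHypergeometric_one_eq_tsum, ordinaryHypergeometric_one_eq_tsum]
  simpa [sub_eq_zero] using hzero

lemma ascPochhammer_mul_ordinaryHypergeometric_one {a b c : ℝ} (hc : ∀ k : ℕ, c ≠ -k)
    (habc : a + b < c) (n : ℕ) :
    (ascPochhammer ℝ n).eval c * (ascPochhammer ℝ n).eval (c - a - b) * ₂F₁ a b c (1 : ℝ) =
      (ascPochhammer ℝ n).eval (c - a) * (ascPochhammer ℝ n).eval (c - b) *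
        ₂F₁ a b (c + n) (1 : ℝ) := by
  induction n with
  | zero => simp
  | succ n ih =>
    have h := ordinaryHypergeometric_one_contiguous (a := a) (b := b)
      (add_natCast_ne_neg_natCast hc n) (by linarith [n.cast_nonneg (α := ℝ)])
    simp only [ascPochhammer_succ_eval, Nat.cast_succ, ← add_assoc]
    linear_combination (c + n) * (c - a - b + n) * ih +
      (ascPochhammer ℝ n).eval (c - a) * (ascPochhammer ℝ n).eval (c - b) * h

lemma tendsto_ascPochhammer_eval_atTop {n : ℕ} (hn : n ≠ 0) :
    Tendsto (fun x : ℝ => (ascPochhammer ℝ n).eval x) atTop atTop := by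
  refine Polynomial.tendsto_atTop_of_leadingCoeff_nonneg _ ?_ ?_
  · rw [← Polynomial.natDegree_pos_iff_degree_pos, ascPochhammer_natDegree]
    exact hn.bot_lt
  · rw [(monic_ascPochhammer ℝ n).leadingCoeff]
    exact zero_le_one

lemma tendsto_ordinaryHypergeometric_one_atTop (a b : ℝ) :
    Tendsto (fun c => ₂F₁ a b c (1 : ℝ)) atTop (𝓝 1) := by
  set c₀ := max 1 (a + b + 1)
  have hc₀ : 0 < c₀ := lt_max_of_lt_left one_pos
  have hsum : Summable (ordinaryHypergeometricCoefficient a b c₀) :=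
    summable_ordinaryHypergeometricCoefficient (ne_neg_natCast_of_pos hc₀)
      (lt_max_of_lt_right (lt_add_one _))
  have hlim (n : ℕ) : Tendsto (fun c => ordinaryHypergeometricCoefficient a b c n) atTop
      (𝓝 (if n = 0 then 1 else 0)) := by
    split_ifs with hn
    · simp [hn]
    · simpa using (tendsto_ascPochhammer_eval_atTop hn).inv_tendsto_atTop.const_mul
        ((n ! : ℝ)⁻¹ * (ascPochhammer ℝ n).eval a * (ascPochhammer ℝ n).eval b)
  simp only [ordinaryHypergeometric_one_eq_tsum]
  rw [← tsum_ite_eq 0 (fun _ => (1 : ℝ))]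
  refine tendsto_tsum_of_dominated_convergence hsum.norm hlim ?_
  filter_upwards [eventually_ge_atTop c₀] with c hc n
  have hpos : 0 < (ascPochhammer ℝ n).eval c₀ := ascPochhammer_pos n c₀ hc₀
  have hle := ascPochhammer_eval_le_eval n hc₀.le hc
  simp only [ordinaryHypergeometricCoefficient, norm_mul, norm_inv]
  rw [Real.norm_of_nonneg hpos.le, Real.norm_of_nonneg (hpos.le.trans hle)]
  gcongr

theorem ordinaryHypergeometric_one_eq_Gamma {a b c : ℝ} (hc : ∀ k : ℕ, c ≠ -k)
    (habc : a + b < c) :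
    ₂F₁ a b c (1 : ℝ) = Gamma c * Gamma (c - a - b) / (Gamma (c - a) * Gamma (c - b)) := by
  have hc0 := Gamma_ne_zero hc
  have hcab0 : Gamma (c - a - b) ≠ 0 := (Gamma_pos_of_pos (by linarith)).ne'
  have hshift : Tendsto (fun n : ℕ => ₂F₁ a b (c + n) (1 : ℝ)) atTop (𝓝 1) :=
    (tendsto_ordinaryHypergeometric_one_atTop a b).comp
      (tendsto_atTop_add_const_left _ c tendsto_natCast_atTop_atTop)
  have hleft := ((tendsto_ascPochhammer_eval_div c).mul
    (tendsto_ascPochhammer_eval_div (c - a - b))).mul_const (₂F₁ a b c (1 : ℝ))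
  have hright := ((tendsto_ascPochhammer_eval_div (c - a)).mul
    (tendsto_ascPochhammer_eval_div (c - b))).mul hshift
  have heq := tendsto_nhds_unique hleft (hright.congr' ?_)
  · rw [mul_one] at heq
    rw [div_eq_mul_inv, mul_inv, ← heq]
    field_simp
  · filter_upwards [eventually_gt_atTop 0] with n hn
    have hn' : (0 : ℝ) < n := Nat.cast_pos.2 hn
    have hpow : (n : ℝ) ^ (c - 1) * (n : ℝ) ^ (c - a - b - 1) =
        (n : ℝ) ^ (c - a - 1) * (n : ℝ) ^ (c - b - 1) := by
      rw [← rpow_add hn', ← rpow_add hn']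
      ring_nf
    rw [div_mul_div_comm, div_mul_div_comm, mul_mul_mul_comm _ ((n : ℝ) ^ (c - 1)),
      mul_mul_mul_comm _ ((n : ℝ) ^ (c - a - 1)), hpow, div_mul_eq_mul_div, div_mul_eq_mul_div,
      ascPochhammer_mul_ordinaryHypergeometric_one hc habc]

theorem tendsto_ordinaryHypergeometric_nhdsLT_one {a b c : ℝ} (hc : ∀ k : ℕ, c ≠ -k)
    (habc : a + b < c) : Tendsto (₂F₁ a b c) (𝓝[<] (1 : ℝ)) (𝓝 (₂F₁ a b c (1 : ℝ))) := by
  rw [ordinaryHypergeometric_one_eq_tsum]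
  simpa only [← ordinaryHypergeometric_eq_tsum_coefficient] using
    Real.tendsto_tsum_powerSeries_nhdsWithin_lt
      (summable_ordinaryHypergeometricCoefficient hc habc).hasSum.tendsto_sum_nat

end GaussSummation

section TwoPointKernel

lemma hyp2F1_eq_ordinaryHypergeometric (a b c z : ℝ) : hyp2F1 a b c z = ₂F₁ a b c z := by
  rw [ordinaryHypergeometric_eq_tsum_coefficient]
  refine tsum_congr fun n => ?_
  simp only [poch, ordinaryHypergeometricCoefficient, ascPochhammer_eval_eq_prod_range]
  ring

/-- The cross-ratio of `r, s` with the endpoints `0, 1` of the bridge; it is the argument of the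
hypergeometric function in `twoPt δ s r` when `r < s`. -/
noncomputable def crossRatio (s r : ℝ) : ℝ := r * (1 - s) / (s * (1 - r))

lemma one_sub_crossRatio {s r : ℝ} (hs : s ≠ 0) (hr : r ≠ 1) :
    1 - crossRatio s r = (s - r) / (s * (1 - r)) := by
  have hr' : 1 - r ≠ 0 := sub_ne_zero.2 hr.symm
  rw [crossRatio]
  field_simp
  ring

lemma crossRatio_mem_Ioo {s r : ℝ} (hs : s < 1) (hr : r ∈ Set.Ioo 0 s) :
    crossRatio s r ∈ Set.Ioo 0 1 := by
  obtain ⟨hr0, hrs⟩ := hr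
  have hs0 : 0 < s := hr0.trans hrs
  have hr1 : r < 1 := hrs.trans hs
  have hden : 0 < s * (1 - r) := mul_pos hs0 (sub_pos.2 hr1)
  refine ⟨div_pos (mul_pos hr0 (sub_pos.2 hs)) hden, sub_pos.1 ?_⟩
  rw [one_sub_crossRatio hs0.ne' hr1.ne]
  exact div_pos (sub_pos.2 hrs) hden

lemma abs_crossRatio_lt_one {s r : ℝ} (hs : s < 1) (hr : r ∈ Set.Ioo 0 s) :
    |crossRatio s r| < 1 :=
  abs_lt.2 ⟨neg_one_lt_zero.trans (crossRatio_mem_Ioo hs hr).1, (crossRatio_mem_Ioo hs hr).2⟩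

lemma hasDerivAt_crossRatio {s r : ℝ} (hs : s ≠ 0) (hr : r ≠ 1) :
    HasDerivAt (crossRatio s) ((1 - s) / (s * (1 - r) ^ 2)) r := by
  have hr' : 1 - r ≠ 0 := sub_ne_zero.2 hr.symm
  have hnum : HasDerivAt (fun x => x * (1 - s)) (1 - s) r := by
    simpa using (hasDerivAt_id r).mul_const (1 - s)
  have hden : HasDerivAt (fun x => s * (1 - x)) (-s) r := by
    simpa using ((hasDerivAt_id r).const_sub 1).const_mul s
  refine (hnum.div hden (mul_ne_zero hs hr')).congr_deriv ?_
  field_simp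
  ring

lemma tendsto_crossRatio {s : ℝ} (hs : s ∈ Set.Ioo (0 : ℝ) 1) :
    Tendsto (crossRatio s) (𝓝[Set.Ioo 0 s] s) (𝓝[<] 1) := by
  have hs1 : 1 - s ≠ 0 := (sub_pos.2 hs.2).ne'
  have hself : crossRatio s s = 1 := div_self (mul_ne_zero hs.1.ne' hs1)
  have hcont : ContinuousAt (crossRatio s) s :=
    (hasDerivAt_crossRatio hs.1.ne' hs.2.ne).continuousAt
  refine tendsto_nhdsWithin_iff.2 ⟨hself ▸ hcont.tendsto.mono_left nhdsWithin_le_nhds, ?_⟩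
  filter_upwards [self_mem_nhdsWithin] with r hr using (crossRatio_mem_Ioo hs.2 hr).2

lemma twoPt_eq_sqrt_mul_ordinaryHypergeometric {δ : ℝ} (hδ : 0 < δ) {s r : ℝ} (hs : s < 1)
    (hr : r ∈ Set.Ioo 0 s) :
    twoPt δ s r = Kcoef δ * √(s * (1 - s)) *
      (√(r * (1 - r)) * ₂F₁ (-1 / 2) (-1 / 2) (δ / 2) (crossRatio s r)) := by
  have hsr : 0 < s - r := sub_pos.2 hr.2
  have hs0 : 0 < s := hr.1.trans hr.2
  have hr1 : 0 < 1 - r := sub_pos.2 (hr.2.trans hs)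
  have hq : 0 < s * (1 - r) := mul_pos hs0 hr1
  have hp : 0 < r * (1 - s) := mul_pos hr.1 (sub_pos.2 hs)
  have heuler := ordinaryHypergeometric_euler_transformation ((δ + 1) / 2) ((δ + 1) / 2)
    (ne_neg_natCast_of_pos (half_pos hδ)) (abs_crossRatio_lt_one hs hr)
  rw [show δ / 2 - (δ + 1) / 2 = -1 / 2 by ring,
    show (δ + 1) / 2 + (δ + 1) / 2 - δ / 2 = δ / 2 + 1 by ring,
    one_sub_crossRatio hs0.ne' (sub_pos.1 hr1).ne, div_rpow hsr.le hq.le] at heuler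
  have hsqrt : √(s * (1 - s)) * √(r * (1 - r)) = √(r * (1 - s)) * √(s * (1 - r)) := by
    rw [← sqrt_mul (mul_pos hs0 (sub_pos.2 hs)).le, ← sqrt_mul hp.le]
    ring_nf
  rw [← heuler, mul_assoc (Kcoef δ), ← mul_assoc (√(s * (1 - s))), hsqrt, twoPt,
    if_neg hr.2.not_gt, ← crossRatio, hyp2F1_eq_ordinaryHypergeometric,
    show -((δ + 1) / 2) = 1 / 2 - (δ / 2 + 1) by ring, rpow_sub hq, ← sqrt_eq_rpow, ← sqrt_eq_rpow]
  ring

lemma hasDerivAt_twoPt {δ : ℝ} (hδ : 0 < δ) {s r : ℝ} (hs : s < 1) (hr : r ∈ Set.Ioo 0 s) :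
    HasDerivAt (twoPt δ s)
      (Kcoef δ * (√(s * (1 - s)) / √(r * (1 - r)) * ((1 - 2 * r) / 2) *
            ₂F₁ (-1 / 2) (-1 / 2) (δ / 2) (crossRatio s r) +
          √(s * (1 - s)) * √(r * (1 - r)) * ((1 - s) / (s * (1 - r) ^ 2)) / (2 * δ) *
            ₂F₁ (1 / 2) (1 / 2) (δ / 2 + 1) (crossRatio s r))) r := by
  have hr1 : r < 1 := hr.2.trans hs
  have hrr : 0 < r * (1 - r) := mul_pos hr.1 (sub_pos.2 hr1)
  have hsqrt : HasDerivAt (fun x => √(x * (1 - x))) ((1 - 2 * r) / (2 * √(r * (1 - r)))) r :=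
    (((hasDerivAt_id' r).mul ((hasDerivAt_id' r).const_sub 1)).congr_deriv (by ring)).sqrt hrr.ne'
  have hF := hasDerivAt_ordinaryHypergeometric (-1 / 2) (-1 / 2) (δ / 2)
    (abs_crossRatio_lt_one hs hr)
  rw [show (-1 / 2 : ℝ) + 1 = 1 / 2 by norm_num,
    show (-1 / 2 : ℝ) * (-1 / 2) / (δ / 2) = 1 / (2 * δ) by ring] at hF
  have hcomp := hF.comp r (hasDerivAt_crossRatio (hr.1.trans hr.2).ne' hr1.ne)
  have hev : twoPt δ s =ᶠ[𝓝 r] fun x => Kcoef δ * √(s * (1 - s)) *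
      (√(x * (1 - x)) * ₂F₁ (-1 / 2) (-1 / 2) (δ / 2) (crossRatio s x)) := by
    filter_upwards [Ioo_mem_nhds hr.1 hr.2] with x hx
    exact twoPt_eq_sqrt_mul_ordinaryHypergeometric hδ hs hx
  refine (((hsqrt.mul hcomp).const_mul _).congr_of_eventuallyEq hev).congr_deriv ?_
  simp only [Function.comp_apply]
  ring

lemma Kcoef_mul_Gamma {δ : ℝ} (hδ : 0 < δ) :
    Kcoef δ * (Gamma (δ / 2) * Gamma (δ / 2 + 1) / Gamma ((δ + 1) / 2) ^ 2) = δ := by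
  have hnum : Gamma ((δ + 1) / 2) ≠ 0 := (Gamma_pos_of_pos (by linarith)).ne'
  have hden : Gamma (δ / 2) ≠ 0 := (Gamma_pos_of_pos (half_pos hδ)).ne'
  rw [Kcoef, Gamma_add_one (half_pos hδ).ne']
  field_simp

lemma Kcoef_mul_ordinaryHypergeometric_neg_half {δ : ℝ} (hδ : 0 < δ) :
    Kcoef δ * ₂F₁ (-1 / 2) (-1 / 2) (δ / 2) (1 : ℝ) = δ := by
  rw [ordinaryHypergeometric_one_eq_Gamma (ne_neg_natCast_of_pos (half_pos hδ)) (by linarith),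
    ← sq, show δ / 2 - -1 / 2 - -1 / 2 = δ / 2 + 1 by ring,
    show δ / 2 - -1 / 2 = (δ + 1) / 2 by ring, Kcoef_mul_Gamma hδ]

lemma Kcoef_mul_ordinaryHypergeometric_half {δ : ℝ} (hδ : 0 < δ) :
    Kcoef δ * ₂F₁ (1 / 2) (1 / 2) (δ / 2 + 1) (1 : ℝ) = δ := by
  rw [ordinaryHypergeometric_one_eq_Gamma (ne_neg_natCast_of_pos (by linarith)) (by linarith),
    ← sq, show δ / 2 + 1 - 1 / 2 - 1 / 2 = δ / 2 by ring,
    show δ / 2 + 1 - 1 / 2 = (δ + 1) / 2 by ring, mul_comm (Gamma (δ / 2 + 1)), Kcoef_mul_Gamma hδ]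

lemma tendsto_ordinaryHypergeometric_crossRatio {a b c s : ℝ} (hc : 0 < c) (habc : a + b < c)
    (hs : s ∈ Set.Ioo (0 : ℝ) 1) :
    Tendsto (fun r => ₂F₁ a b c (crossRatio s r)) (𝓝[Set.Ioo 0 s] s)
      (𝓝 (₂F₁ a b c (1 : ℝ))) :=
  (tendsto_ordinaryHypergeometric_nhdsLT_one (ne_neg_natCast_of_pos hc) habc).comp
    (tendsto_crossRatio hs)

lemma tendsto_sqrt_div_sqrt {s : ℝ} (hs : s ∈ Set.Ioo (0 : ℝ) 1) :
    Tendsto (fun r => √(s * (1 - s)) / √(r * (1 - r))) (𝓝 s) (𝓝 1) := by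
  have hq : √(s * (1 - s)) ≠ 0 := (sqrt_pos.2 (mul_pos hs.1 (sub_pos.2 hs.2))).ne'
  have hcont : ContinuousAt (fun r => √(s * (1 - s)) / √(r * (1 - r))) s :=
    ContinuousAt.div (by fun_prop) (by fun_prop) hq
  simpa only [div_self hq] using hcont.tendsto

lemma tendsto_sqrt_mul_deriv_crossRatio {s : ℝ} (hs : s ∈ Set.Ioo (0 : ℝ) 1) :
    Tendsto (fun r => √(s * (1 - s)) * √(r * (1 - r)) * ((1 - s) / (s * (1 - r) ^ 2)))
      (𝓝 s) (𝓝 1) := by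
  have hs0 : s ≠ 0 := hs.1.ne'
  have hs1 : 1 - s ≠ 0 := (sub_pos.2 hs.2).ne'
  have hcont : ContinuousAt
      (fun r => √(s * (1 - s)) * √(r * (1 - r)) * ((1 - s) / (s * (1 - r) ^ 2))) s :=
    ContinuousAt.mul (by fun_prop)
      (ContinuousAt.div (by fun_prop) (by fun_prop) (mul_ne_zero hs0 (pow_ne_zero 2 hs1)))
  convert hcont.tendsto using 2
  rw [mul_self_sqrt (mul_pos hs.1 (sub_pos.2 hs.2)).le]
  field_simp

end TwoPointKernel

theorem twoPt_deriv_left_limit (δ : ℝ) (hδ : 0 < δ) (s : ℝ) (hs : s ∈ Set.Ioo (0 : ℝ) 1) :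
    Tendsto (fun r => deriv (fun r => twoPt δ s r) r)
      (nhdsWithin s (Set.Ioo 0 s)) (nhds (δ * (1 - s) - (δ - 1) / 2)) := by
  have hF := tendsto_ordinaryHypergeometric_crossRatio (a := -1 / 2) (b := -1 / 2)
    (half_pos hδ) (by linarith) hs
  have hF' := tendsto_ordinaryHypergeometric_crossRatio (a := 1 / 2) (b := 1 / 2)
    (add_pos (half_pos hδ) one_pos) (by linarith) hs
  have hlin : Tendsto (fun r : ℝ => (1 - 2 * r) / 2) (𝓝 s) (𝓝 ((1 - 2 * s) / 2)) :=
    Continuous.tendsto (by fun_prop) s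
  have hcoeff := ((tendsto_sqrt_div_sqrt hs).mul hlin).mono_left
    (nhdsWithin_le_nhds (s := Set.Ioo 0 s))
  have hcoeff' := ((tendsto_sqrt_mul_deriv_crossRatio hs).div_const (2 * δ)).mono_left
    (nhdsWithin_le_nhds (s := Set.Ioo 0 s))
  have hvalue : Kcoef δ * (1 * ((1 - 2 * s) / 2) * ₂F₁ (-1 / 2) (-1 / 2) (δ / 2) (1 : ℝ) +
      1 / (2 * δ) * ₂F₁ (1 / 2) (1 / 2) (δ / 2 + 1) (1 : ℝ)) = δ * (1 - s) - (δ - 1) / 2 := by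
    have hδδ : 1 / (2 * δ) * δ = 1 / 2 := by field_simp
    linear_combination (1 - 2 * s) / 2 * Kcoef_mul_ordinaryHypergeometric_neg_half hδ +
      1 / (2 * δ) * Kcoef_mul_ordinaryHypergeometric_half hδ + hδδ
  rw [← hvalue]
  refine (((hcoeff.mul hF).add (hcoeff'.mul hF')).const_mul (Kcoef δ)).congr' ?_
  filter_upwards [self_mem_nhdsWithin] with r hr using (hasDerivAt_twoPt hδ hs.2 hr).deriv.symm
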